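/- Let D be a semisimple x-monotone drawing of K_4. Then at most one unordered pair of edges of D crosses an odd number of times (ocr(D) ≤ 1), and ocr(D) + E_1(D) = 3; that is, D has exactly three 1-edges if ocr(D) = 0 and exactly two 1-edges if ocr(D) = 1. -/

import Mathlib

/-- `Zval n` is Hill's conjectured value
`Z(n) = (1/4)⌊n/2⌋⌊(n−1)/2⌋⌊(n−2)/2⌋⌊(n−3)/2⌋` for the crossing number of `K n`.
(The product of the four floors is always divisible by 4, so natural division is exact.) -/
def Zval (n : ℕ) : ℕ :=
  n / 2 * ((n - 1) / 2) * ((n - 2) / 2) * ((n - 3) / 2) / 4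

/-- An x-monotone drawing of the complete graph `K n`: vertices `v i = (x i, 0)` with
`x` strictly increasing, and for each pair `i < j` a continuous function `e i j` on
`[x i, x j]` vanishing at the endpoints, whose graph is the arc of the edge `{i, j}`.
Edges avoid the intermediate vertices, any two distinct edges meet in finitely many
interior parameters, and at each such common point the difference changes sign
(a proper crossing). -/
structure XMonotoneDrawing (n : ℕ) where
  x : Fin n → ℝ
  x_strictMono : StrictMono x
  e : Fin n → Fin n → ℝ → ℝ
  cont : ∀ i j : Fin n, i < j → ContinuousOn (e i j) (Set.Icc (x i) (x j))
  end_left : ∀ i j : Fin n, i < j → e i j (x i) = 0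
  end_right : ∀ i j : Fin n, i < j → e i j (x j) = 0
  avoid_vertex : ∀ i m j : Fin n, i < m → m < j → e i j (x m) ≠ 0
  cross_finite : ∀ i j k l : Fin n, i < j → k < l → (i, j) ≠ (k, l) →
    {t : ℝ | max (x i) (x k) < t ∧ t < min (x j) (x l) ∧ e i j t = e k l t}.Finite
  sign_change : ∀ i j k l : Fin n, i < j → k < l → (i, j) ≠ (k, l) →
    ∀ t : ℝ, max (x i) (x k) < t → t < min (x j) (x l) → e i j t = e k l t →
      ∃ ε > (0 : ℝ), ∀ s : ℝ, max (x i) (x k) < s → t - ε < s → s < t →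
        ∀ u : ℝ, u < min (x j) (x l) → t < u → u < t + ε →
          (e i j s - e k l s) * (e i j u - e k l u) < 0

namespace XMonotoneDrawing

variable {n : ℕ}

/-- The set of parameters at which the edges `{i,j}` and `{k,l}` cross
(both edges are parametrized over the `x`-axis). -/
def crossSet (D : XMonotoneDrawing n) (i j k l : Fin n) : Set ℝ :=
  {t : ℝ | max (D.x i) (D.x k) < t ∧ t < min (D.x j) (D.x l) ∧ D.e i j t = D.e k l t}

/-- The number of crossings between the edges `{i,j}` and `{k,l}`. -/
noncomputable def crossCount (D : XMonotoneDrawing n) (i j k l : Fin n) : ℕ :=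
  (D.crossSet i j k l).ncard

/-- Two edges `{i,j}` and `{k,l}` are adjacent if they share an endpoint index. -/
def Adj (i j k l : Fin n) : Prop := i = k ∨ i = l ∨ j = k ∨ j = l

/-- A drawing is semisimple if no two adjacent edges cross. -/
def Semisimple (D : XMonotoneDrawing n) : Prop :=
  ∀ i j k l : Fin n, i < j → k < l → (i, j) ≠ (k, l) → Adj i j k l →
    D.crossCount i j k l = 0

/-- A drawing is weakly semisimple if every two adjacent edges cross an even
number of times. -/
def WeaklySemisimple (D : XMonotoneDrawing n) : Prop :=
  ∀ i j k l : Fin n, i < j → k < l → (i, j) ≠ (k, l) → Adj i j k l →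
    Even (D.crossCount i j k l)

/-- A drawing is simple if no two adjacent edges cross and every two non-adjacent
edges cross at most once. -/
def Simple (D : XMonotoneDrawing n) : Prop :=
  ∀ i j k l : Fin n, i < j → k < l → (i, j) ≠ (k, l) →
    (Adj i j k l → D.crossCount i j k l = 0) ∧
    (¬ Adj i j k l → D.crossCount i j k l ≤ 1)

/-- `cr D`: the total number of crossings of `D`. (Each unordered pair of distinct
edges is counted twice in the sum, whence the division by 2; `crossCount` is
symmetric in the two edges.) -/
noncomputable def cr (D : XMonotoneDrawing n) : ℕ :=
  (∑ p : (Fin n × Fin n) × (Fin n × Fin n),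
      if p.1.1 < p.1.2 ∧ p.2.1 < p.2.2 ∧ p.1 ≠ p.2 then
        D.crossCount p.1.1 p.1.2 p.2.1 p.2.2
      else 0) / 2

/-- `ocr D`: the number of unordered pairs of edges of `D` crossing an odd number
of times. (Each unordered pair appears twice as an ordered pair.) -/
noncomputable def ocr (D : XMonotoneDrawing n) : ℕ :=
  {p : (Fin n × Fin n) × (Fin n × Fin n) |
    p.1.1 < p.1.2 ∧ p.2.1 < p.2.2 ∧ p.1 ≠ p.2 ∧
      Odd (D.crossCount p.1.1 p.1.2 p.2.1 p.2.2)}.ncard / 2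

/-- The signature of the triple `i < j < k`: `true` (i.e. `+`) if the vertex `v j`
lies below the edge `{i, k}`, i.e. `e i k (x j) > 0`, and `false` (i.e. `−`) otherwise. -/
noncomputable def sig (D : XMonotoneDrawing n) (i j k : Fin n) : Bool :=
  if 0 < D.e i k (D.x j) then true else false

/-- `D` realizes the signature function `σ` if `σ_D` and `σ` agree on all
increasing triples. -/
def Realizes (D : XMonotoneDrawing n) (σ : Fin n → Fin n → Fin n → Bool) : Prop :=
  ∀ i j k : Fin n, i < j → j < k → D.sig i j k = σ i j k

/-- A drawing is pseudolinear if its edges extend to continuous curves over all of `ℝ`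
that avoid all vertices other than their endpoints and such that any two of these
extended curves cross exactly once (the crossing being a sign change of the difference). -/
def Pseudolinear (D : XMonotoneDrawing n) : Prop :=
  ∃ p : Fin n → Fin n → ℝ → ℝ,
    (∀ i j : Fin n, i < j → Continuous (p i j)) ∧
    (∀ i j : Fin n, i < j → ∀ t ∈ Set.Icc (D.x i) (D.x j), p i j t = D.e i j t) ∧
    (∀ i j m : Fin n, i < j → m ≠ i → m ≠ j → p i j (D.x m) ≠ 0) ∧
    (∀ i j k l : Fin n, i < j → k < l → (i, j) ≠ (k, l) →
      ∃ t : ℝ, p i j t = p k l t ∧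
        ∀ s u : ℝ, s < t → t < u →
          (p i j s - p k l s) * (p i j u - p k l u) < 0)

/-- The arc of the edge `{i, j}` as a subset of the plane `ℝ × ℝ`. -/
def edgeArc (D : XMonotoneDrawing n) (i j : Fin n) : Set (ℝ × ℝ) :=
  {q : ℝ × ℝ | D.x i ≤ q.1 ∧ q.1 ≤ D.x j ∧ q.2 = D.e i j q.1}

/-- The union of all edge arcs of the drawing. -/
def arcUnion (D : XMonotoneDrawing n) : Set (ℝ × ℝ) :=
  ⋃ i : Fin n, ⋃ j : Fin n, ⋃ (_ : i < j), D.edgeArc i j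

end XMonotoneDrawing

namespace Sig

variable {n : ℕ}

/-- With respect to a signature function `σ`, the vertex `m ∉ {i, j}` is on the left of
the directed edge `(i, j)` (where `i < j`). -/
def LeftOf (σ : Fin n → Fin n → Fin n → Bool) (i j m : Fin n) : Prop :=
  (i < m ∧ m < j ∧ σ i m j = false) ∨ (m < i ∧ σ m i j = true) ∨ (j < m ∧ σ i j m = true)

/-- The number of vertices on the left of the directed edge `(i, j)`. -/
noncomputable def leftCount (σ : Fin n → Fin n → Fin n → Bool) (i j : Fin n) : ℕ :=
  {m : Fin n | LeftOf σ i j m}.ncard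

/-- The edge `{i, j}` (with `i < j`) is a `k`-edge of `σ` if `min(ℓ, n − 2 − ℓ) = k`,
where `ℓ` is the number of vertices on its left. -/
def IsKEdge (σ : Fin n → Fin n → Fin n → Bool) (k : ℕ) (i j : Fin n) : Prop :=
  min (leftCount σ i j) (n - 2 - leftCount σ i j) = k

/-- `Ek σ k`: the number of `k`-edges of `σ`. -/
noncomputable def Ek (σ : Fin n → Fin n → Fin n → Bool) (k : ℕ) : ℕ :=
  {p : Fin n × Fin n | p.1 < p.2 ∧ IsKEdge σ k p.1 p.2}.ncard

/-- `Ele σ k = E_{≤k}(σ)`: the number of `≤k`-edges of `σ`. -/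
noncomputable def Ele (σ : Fin n → Fin n → Fin n → Bool) (k : ℕ) : ℕ :=
  ∑ i ∈ Finset.range (k + 1), Ek σ i

/-- `Elele σ k = E_{≤≤k}(σ) = Σ_{j=0}^{k} E_{≤j}(σ)`. -/
noncomputable def Elele (σ : Fin n → Fin n → Fin n → Bool) (k : ℕ) : ℕ :=
  ∑ j ∈ Finset.range (k + 1), Ele σ j

/-- `E_{≤≤k}` with an integer index, which vanishes for negative `k`. -/
noncomputable def ElelZ (σ : Fin n → Fin n → Fin n → Bool) (k : ℤ) : ℕ :=
  if 0 ≤ k then Elele σ k.toNat else 0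

/-- The left count of the edge `{i, j}` in the drawing restricted to the first
`n − 1` vertices (the last vertex deleted). -/
noncomputable def leftCountRes (σ : Fin n → Fin n → Fin n → Bool) (i j : Fin n) : ℕ :=
  {m : Fin n | LeftOf σ i j m ∧ (m : ℕ) + 1 < n}.ncard

/-- The edge `{i, j}` is a `k`-edge of the restriction of `σ` to the first `n − 1`
vertices (there `min(ℓ', (n−1) − 2 − ℓ') = k`). -/
def IsKEdgeRes (σ : Fin n → Fin n → Fin n → Bool) (k : ℕ) (i j : Fin n) : Prop :=
  min (leftCountRes σ i j) (n - 3 - leftCountRes σ i j) = k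

/-- The edge `{i, j}` is a `(D,D')`-invariant `≤k`-edge: it avoids the last vertex and
is an `m`-edge with `m ≤ k` both in `σ` and in the restriction of `σ` to the first
`n − 1` vertices. -/
def InvariantLeK (σ : Fin n → Fin n → Fin n → Bool) (k : ℕ) (i j : Fin n) : Prop :=
  (j : ℕ) + 1 < n ∧ (∃ m ≤ k, IsKEdge σ m i j) ∧ (∃ m ≤ k, IsKEdgeRes σ m i j)

/-- The ten 4-tuple forms allowed in signature functions of semisimple x-monotone
drawings: `++++, −−−−, ++−−, −−++, −++−, +−−+, −−−+, +++−, +−−−, −+++`. -/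
def AllowedForm (a b c d : Bool) : Prop :=
  (a, b, c, d) ∈ ([(true, true, true, true), (false, false, false, false),
    (true, true, false, false), (false, false, true, true),
    (false, true, true, false), (true, false, false, true),
    (false, false, false, true), (true, true, true, false),
    (true, false, false, false), (false, true, true, true)] :
      List (Bool × Bool × Bool × Bool))

/-- A signature function is admissible if every increasing 4-tuple is of one of the
ten allowed forms. -/
def Admissible (σ : Fin n → Fin n → Fin n → Bool) : Prop :=
  ∀ a b c d : Fin n, a < b → b < c → c < d →
    AllowedForm (σ a b c) (σ a b d) (σ a c d) (σ b c d)

/-- The six convex forms: `++++, −−−−, ++−−, −−++, −++−, +−−+`. -/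
def ConvexForm (a b c d : Bool) : Prop :=
  (a, b, c, d) ∈ ([(true, true, true, true), (false, false, false, false),
    (true, true, false, false), (false, false, true, true),
    (false, true, true, false), (true, false, false, true)] :
      List (Bool × Bool × Bool × Bool))

/-- The 4-tuple `a < b < c < d` is convex in `σ`. -/
def Convex4 (σ : Fin n → Fin n → Fin n → Bool) (a b c d : Fin n) : Prop :=
  ConvexForm (σ a b c) (σ a b d) (σ a c d) (σ b c d)

/-- The eight 4-tuple forms of pseudolinear x-monotone drawings (the sign-monotone
sequences): `++++, +++−, ++−−, +−−−, −−−−, −−−+, −−++, −+++`. -/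
def PLForm (a b c d : Bool) : Prop :=
  (a, b, c, d) ∈ ([(true, true, true, true), (true, true, true, false),
    (true, true, false, false), (true, false, false, false),
    (false, false, false, false), (false, false, false, true),
    (false, false, true, true), (false, true, true, true)] :
      List (Bool × Bool × Bool × Bool))

/-- The relation `j ⋖ k` on `{j : i < j}`: `j ⋖ k` iff (`j < k` and `σ i j k = +`)
or (`k < j` and `σ i k j = −`). -/
def Below (σ : Fin n → Fin n → Fin n → Bool) (i j k : Fin n) : Prop :=
  (j < k ∧ σ i j k = true) ∨ (k < j ∧ σ i k j = false)

end Sig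

/-!
The difference of two edges changes sign at each crossing, so the parity of the number of crossings
is read off from the signs of the difference at the two ends of the common domain. For disjoint
edges on `i < j < k < l` these are values of `σ`: `{i, k}` and `{j, l}` cross oddly iff
`σ(i,j,k) = σ(j,k,l)`, and `{i, l}` and `{j, k}` iff `σ(i,j,l) ≠ σ(i,k,l)`.

Two edges with a common left endpoint that cross evenly have the same vertical order near that
endpoint as at the earlier of their right endpoints, and that order is a value of `σ`. Transitivity
of the order at the first vertex, and its mirror image at the last, leave ten forms for the four
signs on a 4-tuple, for each of which the claim is a finite count.
-/

open Filter Finset SignType Topology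

theorem sign_eq_neg_sign_of_mul_neg {R : Type*} [Ring R] [LinearOrder R] [IsStrictOrderedRing R]
    {x y : R} (h : x * y < 0) : sign y = -sign x := by
  rcases mul_neg_iff.mp h with ⟨hx, hy⟩ | ⟨hx, hy⟩ <;> simp [hx, hy]

theorem sign_add_eq_of_sign_eq {M : Type*} [AddMonoid M] [LinearOrder M] [AddLeftStrictMono M]
    {x y : M} (h : sign x = sign y) : sign (x + y) = sign y := by
  rcases lt_trichotomy y 0 with hy | rfl | hy
  · rw [sign_neg hy, sign_eq_neg_one_iff] at *
    exact add_neg h hy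
  · simpa using h
  · rw [sign_pos hy, sign_eq_one_iff] at *
    exact add_pos h hy

theorem sign_eq_sign_of_isPreconnected {X M : Type*} [TopologicalSpace X]
    [Zero M] [LinearOrder M] [TopologicalSpace M] [OrderTopology M] {s : Set X} {f : X → M}
    (hs : IsPreconnected s) (hf : ContinuousOn f s) (h0 : ∀ t ∈ s, f t ≠ 0) {x y : X}
    (hx : x ∈ s) (hy : y ∈ s) : sign (f x) = sign (f y) :=
  hs.constant (f := fun t => sign (f t))
    (fun t ht => (continuousAt_sign_of_ne_zero (h0 t ht)).comp_continuousWithinAt (hf t ht)) hx hy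

section SignChanges

variable {X R : Type*} [Ring R] [LinearOrder R] [TopologicalSpace X]

/-- `f` changes sign at `t`: its values just left and just right of `t` are nonzero and of
opposite signs. The value `f t` itself is not constrained. -/
def ChangesSignAt [Preorder X] (f : X → R) (t : X) : Prop :=
  ∀ᶠ s in 𝓝[<] t, ∀ᶠ u in 𝓝[>] t, f s * f u < 0

variable [IsStrictOrderedRing R] [TopologicalSpace R] [OrderTopology R]
  [ConditionallyCompleteLinearOrder X] [OrderTopology X] [DenselyOrdered X]
  {f : X → R} {a b : X} {Z : Finset X}

theorem sign_eq_neg_one_pow_card_zeros_mul_sign (hab : a ≤ b)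
    (hf : ContinuousOn f (Set.Icc a b)) (hZ : ∀ t ∈ Set.Icc a b, f t = 0 ↔ t ∈ Z)
    (hZab : ∀ t ∈ Z, t ∈ Set.Ioo a b) (hsign : ∀ t ∈ Z, ChangesSignAt f t) :
    sign (f b) = (-1) ^ #Z * sign (f a) := by
  induction Z using Finset.induction_on_max generalizing b with
  | empty =>
    have hconst := sign_eq_sign_of_isPreconnected isPreconnected_Icc hf
      (fun t ht => by simp [hZ t ht]) (Set.right_mem_Icc.mpr hab) (Set.left_mem_Icc.mpr hab)
    simpa using hconst
  | insert z Z hlt ih =>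
    obtain ⟨haz, hzb⟩ := hZab z (mem_insert_self z Z)
    have : (𝓝[<] z).NeBot := nhdsLT_neBot_of_exists_lt ⟨a, haz⟩
    have : (𝓝[>] z).NeBot := nhdsGT_neBot_of_exists_gt ⟨b, hzb⟩
    have hZ_lt : ∀ᶠ s in 𝓝[<] z, ∀ t ∈ Z, t < s := (eventually_all_finset Z).mpr fun t ht =>
      eventually_nhdsWithin_of_eventually_nhds (lt_mem_nhds (hlt t ht))
    obtain ⟨s, hsu, hZs, has, hsz⟩ := ((hsign z (mem_insert_self z Z)).and
      (hZ_lt.and (Ioo_mem_nhdsLT haz))).exists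
    obtain ⟨u, hneg, hzu, hub⟩ := (hsu.and (Ioo_mem_nhdsGT hzb)).exists
    have hleft : sign (f s) = (-1) ^ #Z * sign (f a) :=
      ih has.le (hf.mono (Set.Icc_subset_Icc_right (hsz.trans hzb).le))
        (fun t ht => by
          rw [hZ t ⟨ht.1, (ht.2.trans_lt (hsz.trans hzb)).le⟩, mem_insert,
            or_iff_right (ht.2.trans_lt hsz).ne])
        (fun t ht => ⟨(hZab t (mem_insert_of_mem ht)).1, hZs t ht⟩)
        fun t ht => hsign t (mem_insert_of_mem ht)
    have hright : sign (f b) = sign (f u) :=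
      sign_eq_sign_of_isPreconnected isPreconnected_Icc
        (hf.mono (Set.Icc_subset_Icc_left (haz.trans hzu).le))
        (fun t ht => by
          rw [Ne, hZ t ⟨(haz.trans hzu).le.trans ht.1, ht.2⟩, mem_insert, not_or]
          have hzt := hzu.trans_le ht.1
          exact ⟨hzt.ne', fun htZ => (hlt t htZ).not_gt hzt⟩)
        (Set.right_mem_Icc.mpr hub.le) (Set.left_mem_Icc.mpr hub.le)
    rw [hright, sign_eq_neg_sign_of_mul_neg hneg, hleft,
      card_insert_of_notMem fun hz => (hlt z hz).false, pow_succ, mul_neg_one, neg_mul]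

theorem odd_card_zeros_iff_sign_ne (hab : a ≤ b)
    (hf : ContinuousOn f (Set.Icc a b)) (hZ : ∀ t ∈ Set.Icc a b, f t = 0 ↔ t ∈ Z)
    (hZab : ∀ t ∈ Z, t ∈ Set.Ioo a b) (hsign : ∀ t ∈ Z, ChangesSignAt f t) :
    Odd #Z ↔ sign (f a) ≠ sign (f b) := by
  have ha : sign (f a) ≠ 0 := by
    rw [Ne, sign_eq_zero_iff, hZ a (Set.left_mem_Icc.mpr hab)]
    exact fun h => (hZab a h).1.false
  rw [sign_eq_neg_one_pow_card_zeros_mul_sign hab hf hZ hZab hsign]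
  rcases Nat.even_or_odd #Z with h | h
  · simp [h.neg_one_pow, Nat.not_odd_iff_even.mpr h]
  · simpa [h.neg_one_pow, h] using (by decide : ∀ s : SignType, s ≠ 0 → s ≠ -s) _ ha

end SignChanges

namespace XMonotoneDrawing

section

variable {n : ℕ} (D : XMonotoneDrawing n) {i j k l : Fin n}

theorem crossCount_comm (i j k l : Fin n) : D.crossCount i j k l = D.crossCount k l i j := by
  simp only [crossCount, crossSet, max_comm (D.x i), min_comm (D.x j), eq_comm (a := D.e i j _)]

theorem crossCount_eq_zero_of_le (hjk : j ≤ k) : D.crossCount i j k l = 0 := by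
  have hempty : D.crossSet i j k l = ∅ := Set.eq_empty_of_forall_notMem fun t ⟨hkt, htj, _⟩ =>
    (D.x_strictMono.monotone hjk).not_gt
      (((le_max_right _ _).trans_lt hkt).trans (htj.trans_le (min_le_left _ _)))
  rw [crossCount, hempty, Set.ncard_empty]

theorem sign_eq_sign_iff_sig_eq {i' j' k' : Fin n} (hij : i < j) (hjk : j < k) (hij' : i' < j')
    (hjk' : j' < k') :
    sign (D.e i k (D.x j)) = sign (D.e i' k' (D.x j')) ↔ D.sig i j k = D.sig i' j' k' := by
  rcases (D.avoid_vertex i j k hij hjk).lt_or_gt with h | h <;>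
    rcases (D.avoid_vertex i' j' k' hij' hjk').lt_or_gt with h' | h' <;>
    simp [sig, h, h', h.not_gt, h'.not_gt]

theorem changesSignAt_of_mem_crossSet (hij : i < j) (hkl : k < l) (hne : (i, j) ≠ (k, l)) {t : ℝ}
    (ht : t ∈ D.crossSet i j k l) : ChangesSignAt (fun s => D.e i j s - D.e k l s) t := by
  obtain ⟨hlt, htr, heq⟩ := ht
  obtain ⟨ε, hε, h⟩ := D.sign_change i j k l hij hkl hne t hlt htr heq
  filter_upwards [Ioo_mem_nhdsLT hlt, Ioo_mem_nhdsLT (sub_lt_self t hε)] with s hs hsε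
  filter_upwards [Ioo_mem_nhdsGT htr, Ioo_mem_nhdsGT (lt_add_of_pos_right t hε)] with u hu huε
  exact h s hs.1 hsε.1 hs.2 u hu.2 hu.1 huε.2

theorem odd_crossCount_iff_sign_ne (hij : i < j) (hkl : k < l) (hne : (i, j) ≠ (k, l)) {a b : ℝ}
    (hab : a ≤ b) (ha : max (D.x i) (D.x k) ≤ a) (hb : b ≤ min (D.x j) (D.x l))
    (hea : D.e i j a ≠ D.e k l a) (heb : D.e i j b ≠ D.e k l b)
    (hcross : D.crossSet i j k l ⊆ Set.Icc a b) :
    Odd (D.crossCount i j k l) ↔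
      sign (D.e i j a - D.e k l a) ≠ sign (D.e i j b - D.e k l b) := by
  have hfin : (D.crossSet i j k l).Finite := D.cross_finite i j k l hij hkl hne
  have hIoo : ∀ t ∈ D.crossSet i j k l, t ∈ Set.Ioo a b := fun t ht =>
    ⟨(hcross ht).1.lt_of_ne fun h => hea (h ▸ ht.2.2),
      (hcross ht).2.lt_of_ne fun h => heb (h ▸ ht.2.2)⟩
  have hcont : ContinuousOn (fun t => D.e i j t - D.e k l t) (Set.Icc a b) :=
    ((D.cont i j hij).mono (Set.Icc_subset_Icc (le_of_max_le_left ha) (le_min_iff.mp hb).1)).sub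
      ((D.cont k l hkl).mono (Set.Icc_subset_Icc (le_of_max_le_right ha) (le_min_iff.mp hb).2))
  rw [crossCount, Set.ncard_eq_toFinset_card _ hfin]
  refine odd_card_zeros_iff_sign_ne hab hcont (fun t ht => ?_) (by simpa using hIoo)
    fun t ht => D.changesSignAt_of_mem_crossSet hij hkl hne (hfin.mem_toFinset.mp ht)
  rw [hfin.mem_toFinset, sub_eq_zero]
  refine ⟨fun h => ⟨ha.trans_lt (ht.1.lt_of_ne ?_), (ht.2.lt_of_ne ?_).trans_le hb, h⟩,
    fun h => h.2.2⟩
  · rintro rfl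
    exact hea h
  · rintro rfl
    exact heb h

theorem odd_crossCount_interleaved_iff (hij : i < j) (hjk : j < k) (hkl : k < l) :
    Odd (D.crossCount i k j l) ↔ D.sig i j k = D.sig j k l := by
  have hik := hij.trans hjk
  have hjl := hjk.trans hkl
  have hmax : max (D.x i) (D.x j) = D.x j := max_eq_right (D.x_strictMono hij).le
  have hmin : min (D.x k) (D.x l) = D.x k := min_eq_left (D.x_strictMono hkl).le
  have hj := D.avoid_vertex i j k hij hjk
  have hk := D.avoid_vertex j k l hjk hkl
  rw [D.odd_crossCount_iff_sign_ne hik hjl (by simp [hij.ne]) (D.x_strictMono hjk).le hmax.le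
    hmin.ge (by rwa [D.end_left j l hjl]) (by rw [D.end_right i k hik]; exact hk.symm)
    fun t ht => ⟨(hmax ▸ ht.1).le, (hmin ▸ ht.2.1).le⟩,
    ← D.sign_eq_sign_iff_sig_eq hij hjk hjk hkl, D.end_left j l hjl, D.end_right i k hik,
    sub_zero, zero_sub, Left.sign_neg]
  exact (by decide : ∀ s t : SignType, s ≠ 0 → t ≠ 0 → (s ≠ -t ↔ s = t)) _ _
    (sign_ne_zero.mpr hj) (sign_ne_zero.mpr hk)

theorem odd_crossCount_nested_iff (hij : i < j) (hjk : j < k) (hkl : k < l) :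
    Odd (D.crossCount i l j k) ↔ D.sig i j l ≠ D.sig i k l := by
  have hik := hij.trans hjk
  have hjl := hjk.trans hkl
  have hmax : max (D.x i) (D.x j) = D.x j := max_eq_right (D.x_strictMono hij).le
  have hmin : min (D.x l) (D.x k) = D.x k := min_eq_right (D.x_strictMono hkl).le
  have hj := D.avoid_vertex i j l hij hjl
  have hk := D.avoid_vertex i k l hik hkl
  rw [D.odd_crossCount_iff_sign_ne (hij.trans hjl) hjk (by simp [hij.ne]) (D.x_strictMono hjk).le
    hmax.le hmin.ge (by rwa [D.end_left j k hjk]) (by rwa [D.end_right j k hjk])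
    fun t ht => ⟨(hmax ▸ ht.1).le, (hmin ▸ ht.2.1).le⟩, Ne, Ne,
    ← D.sign_eq_sign_iff_sig_eq hij hjl hik hkl, D.end_left j k hjk, D.end_right j k hjk,
    sub_zero, sub_zero]

theorem eventually_sign_sub_eq_of_even_left (hij : i < j) (hjk : j < k)
    (heven : Even (D.crossCount i k i j)) :
    ∀ᶠ t in 𝓝[>] D.x i, sign (D.e i k t - D.e i j t) = sign (D.e i k (D.x j)) := by
  have hik := hij.trans hjk
  have hne : (i, k) ≠ (i, j) := by simp [hjk.ne']
  have hmin : min (D.x k) (D.x j) = D.x j := min_eq_right (D.x_strictMono hjk).le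
  have hbefore : ∀ᶠ t in 𝓝[>] D.x i, ∀ z ∈ D.crossSet i k i j, t < z :=
    (eventually_all_finite (D.cross_finite i k i j hik hij hne)).mpr fun z hz =>
      eventually_nhdsWithin_of_eventually_nhds (gt_mem_nhds (max_self (D.x i) ▸ hz.1))
  filter_upwards [hbefore, Ioo_mem_nhdsGT (D.x_strictMono hij)] with t htz ⟨hit, htj⟩
  have hparity := D.odd_crossCount_iff_sign_ne hik hij hne htj.le ((max_self _).trans_le hit.le)
    hmin.ge (fun h => (htz t ⟨(max_self _).trans_lt hit, htj.trans_eq hmin.symm, h⟩).false)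
    (by rw [D.end_right i j hij]; exact D.avoid_vertex i j k hij hjk)
    fun z hz => ⟨(htz z hz).le, (hmin ▸ hz.2.1).le⟩
  rw [D.end_right i j hij, sub_zero] at hparity
  exact not_not.mp (hparity.not.mp (Nat.not_odd_iff_even.mpr heven))

theorem eventually_sign_sub_eq_of_even_right (hij : i < j) (hjk : j < k)
    (heven : Even (D.crossCount i k j k)) :
    ∀ᶠ t in 𝓝[<] D.x k, sign (D.e i k t - D.e j k t) = sign (D.e i k (D.x j)) := by
  have hik := hij.trans hjk
  have hne : (i, k) ≠ (j, k) := by simp [hij.ne]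
  have hmax : max (D.x i) (D.x j) = D.x j := max_eq_right (D.x_strictMono hij).le
  have hafter : ∀ᶠ t in 𝓝[<] D.x k, ∀ z ∈ D.crossSet i k j k, z < t :=
    (eventually_all_finite (D.cross_finite i k j k hik hjk hne)).mpr fun z hz =>
      eventually_nhdsWithin_of_eventually_nhds (lt_mem_nhds (min_self (D.x k) ▸ hz.2.1))
  filter_upwards [hafter, Ioo_mem_nhdsLT (D.x_strictMono hjk)] with t hzt ⟨hjt, htk⟩
  have hparity := D.odd_crossCount_iff_sign_ne hik hjk hne hjt.le hmax.le
    (htk.le.trans_eq (min_self _).symm)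
    (by rw [D.end_left j k hjk]; exact D.avoid_vertex i j k hij hjk)
    (fun h => (hzt t ⟨hmax.trans_lt hjt, htk.trans_eq (min_self _).symm, h⟩).false)
    fun z hz => ⟨(hmax ▸ hz.1).le, (hzt z hz).le⟩
  rw [D.end_left j k hjk, sub_zero] at hparity
  exact (not_not.mp (hparity.not.mp (Nat.not_odd_iff_even.mpr heven))).symm

end

section

variable {n : ℕ} {D : XMonotoneDrawing n} {i j k l : Fin n}

theorem Semisimple.weaklySemisimple (hD : D.Semisimple) : D.WeaklySemisimple :=
  fun i j k l hij hkl hne hadj => by simp [hD i j k l hij hkl hne hadj]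

namespace WeaklySemisimple

theorem eventually_sign_sub_eq_left (hD : D.WeaklySemisimple) (hij : i < j) (hjk : j < k) :
    ∀ᶠ t in 𝓝[>] D.x i, sign (D.e i k t - D.e i j t) = sign (D.e i k (D.x j)) :=
  D.eventually_sign_sub_eq_of_even_left hij hjk
    (hD i k i j (hij.trans hjk) hij (by simp [hjk.ne']) (Or.inl rfl))

theorem eventually_sign_sub_eq_right (hD : D.WeaklySemisimple) (hij : i < j) (hjk : j < k) :
    ∀ᶠ t in 𝓝[<] D.x k, sign (D.e i k t - D.e j k t) = sign (D.e i k (D.x j)) :=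
  D.eventually_sign_sub_eq_of_even_right hij hjk
    (hD i k j k (hij.trans hjk) hjk (by simp [hij.ne]) (by simp [Adj]))

/-- Transitivity of the vertical order of the edges `{i, j}`, `{i, k}`, `{i, l}` just right of
`x i`; each comparison is read off from one sign. -/
theorem sig_trans_left (hD : D.WeaklySemisimple) (hij : i < j) (hjk : j < k) (hkl : k < l)
    (h : D.sig i j k = D.sig i k l) : D.sig i j l = D.sig i k l := by
  have hik := hij.trans hjk
  have hjl := hjk.trans hkl
  obtain ⟨t, hjk_t, hkl_t, hjl_t⟩ := ((hD.eventually_sign_sub_eq_left hij hjk).and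
    ((hD.eventually_sign_sub_eq_left hik hkl).and (hD.eventually_sign_sub_eq_left hij hjl))).exists
  rw [← D.sign_eq_sign_iff_sig_eq hij hjk hik hkl, ← hjk_t, ← hkl_t] at h
  rw [← D.sign_eq_sign_iff_sig_eq hij hjl hik hkl, ← hjl_t, ← hkl_t,
    ← sign_add_eq_of_sign_eq h, add_comm, sub_add_sub_cancel]

/-- Transitivity of the vertical order of the edges `{i, l}`, `{j, l}`, `{k, l}` just left of
`x l`. -/
theorem sig_trans_right (hD : D.WeaklySemisimple) (hij : i < j) (hjk : j < k) (hkl : k < l)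
    (h : D.sig i j l = D.sig j k l) : D.sig i k l = D.sig j k l := by
  have hik := hij.trans hjk
  have hjl := hjk.trans hkl
  obtain ⟨t, hij_t, hjk_t, hik_t⟩ := ((hD.eventually_sign_sub_eq_right hij hjl).and
    ((hD.eventually_sign_sub_eq_right hjk hkl).and
      (hD.eventually_sign_sub_eq_right hik hkl))).exists
  rw [← D.sign_eq_sign_iff_sig_eq hij hjl hjk hkl, ← hij_t, ← hjk_t] at h
  rw [← D.sign_eq_sign_iff_sig_eq hik hkl hjk hkl, ← hik_t, ← hjk_t,
    ← sign_add_eq_of_sign_eq h, sub_add_sub_cancel]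

end WeaklySemisimple

end

end XMonotoneDrawing

namespace Sig

variable {n : ℕ} {σ τ : Fin n → Fin n → Fin n → Bool} {i j k l m : Fin n}

/-- The condition on `σ` under which the edges `{i, j}` and `{k, l}`, with `i < k`, of a weakly
semisimple drawing with signature `σ` cross oddly: their endpoints interleave (`i < k < j < l`) or
are nested (`i < k < l < j`), and the signs that decide the parity are as required. -/
def OddCrossing (σ : Fin n → Fin n → Fin n → Bool) (i j k l : Fin n) : Prop :=
  (i < k ∧ k < j ∧ j < l ∧ σ i k j = σ k j l) ∨ (i < k ∧ k < l ∧ l < j ∧ σ i k j ≠ σ i l j)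

theorem OddCrossing.left_lt (h : OddCrossing σ i j k l) : i < k :=
  h.elim And.left And.left

instance : Decidable (OddCrossing σ i j k l) :=
  inferInstanceAs (Decidable (_ ∨ _))

instance : Decidable (LeftOf σ i j m) :=
  inferInstanceAs (Decidable (_ ∨ _))

instance (a b c d : Bool) : Decidable (AllowedForm a b c d) :=
  inferInstanceAs (Decidable (_ ∈ _))

/-- The combinatorial odd crossing number: the number of pairs of edges forced by `σ` to cross
oddly. A pair is counted once, with the edge of smaller left endpoint first. -/
def ocr (σ : Fin n → Fin n → Fin n → Bool) : ℕ :=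
  #{p : (Fin n × Fin n) × (Fin n × Fin n) | OddCrossing σ p.1.1 p.1.2 p.2.1 p.2.2}

theorem ocr_congr (h : ∀ i j k, i < j → j < k → σ i j k = τ i j k) : ocr σ = ocr τ := by
  have hiff : ∀ i j k l, OddCrossing σ i j k l ↔ OddCrossing τ i j k l := by grind [OddCrossing]
  simp only [ocr, hiff]

theorem leftCount_eq_card (σ : Fin n → Fin n → Fin n → Bool) (i j : Fin n) :
    leftCount σ i j = #{m | LeftOf σ i j m} := by
  rw [leftCount, ← Set.ncard_coe_finset, coe_filter_univ]

theorem Ek_eq_card (σ : Fin n → Fin n → Fin n → Bool) (k : ℕ) :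
    Ek σ k = #{p : Fin n × Fin n | p.1 < p.2 ∧
      min #{m | LeftOf σ p.1 p.2 m} (n - 2 - #{m | LeftOf σ p.1 p.2 m}) = k} := by
  simp only [Ek, IsKEdge, leftCount_eq_card, ← Set.ncard_coe_finset, coe_filter_univ]

theorem Ek_congr (h : ∀ i j k, i < j → j < k → σ i j k = τ i j k) (k : ℕ) : Ek σ k = Ek τ k := by
  have hiff : ∀ i j m, i < j → (LeftOf σ i j m ↔ LeftOf τ i j m) := by grind [LeftOf]
  have hset : {p : Fin n × Fin n | p.1 < p.2 ∧ IsKEdge σ k p.1 p.2} =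
      {p | p.1 < p.2 ∧ IsKEdge τ k p.1 p.2} := by
    ext p
    simp +contextual only [Set.mem_ofPred_eq, IsKEdge, leftCount, and_congr_right_iff, hiff,
      implies_true]
  rw [Ek, Ek, hset]

theorem allowedForm_iff {a b c d : Bool} :
    AllowedForm a b c d ↔ (a = c → b = c) ∧ (b = d → c = d) := by
  revert a b c d
  decide

/-- The signature function on `Fin 4` taking the values `a b c d` on the increasing triples
`012, 013, 023, 123`; its values on other triples are irrelevant. -/
def ofForm (a b c d : Bool) (i j k : Fin 4) : Bool :=
  if i = 1 then d else if j = 2 then c else if k = 3 then b else a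

theorem eq_ofForm_of_lt_of_lt (σ : Fin 4 → Fin 4 → Fin 4 → Bool) :
    ∀ i j k, i < j → j < k →
      σ i j k = ofForm (σ 0 1 2) (σ 0 1 3) (σ 0 2 3) (σ 1 2 3) i j k := by
  intro i j k
  fin_cases i <;> fin_cases j <;> fin_cases k <;> simp [ofForm]

theorem AllowedForm.ocr_ofForm_add_Ek_one {a b c d : Bool} (h : AllowedForm a b c d) :
    ocr (ofForm a b c d) ≤ 1 ∧ ocr (ofForm a b c d) + Ek (ofForm a b c d) 1 = 3 := by
  rw [Ek_eq_card]
  revert a b c d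
  decide

theorem Admissible.ocr_add_Ek_one {σ : Fin 4 → Fin 4 → Fin 4 → Bool} (hσ : Admissible σ) :
    ocr σ ≤ 1 ∧ ocr σ + Ek σ 1 = 3 := by
  rw [ocr_congr (eq_ofForm_of_lt_of_lt σ), Ek_congr (eq_ofForm_of_lt_of_lt σ)]
  exact (hσ 0 1 2 3 (by decide) (by decide) (by decide)).ocr_ofForm_add_Ek_one

end Sig

namespace XMonotoneDrawing.WeaklySemisimple

variable {n : ℕ} {D : XMonotoneDrawing n} {i j k l : Fin n}

theorem admissible (hD : D.WeaklySemisimple) : Sig.Admissible D.sig :=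
  fun _ _ _ _ hij hjk hkl =>
    Sig.allowedForm_iff.mpr ⟨hD.sig_trans_left hij hjk hkl, hD.sig_trans_right hij hjk hkl⟩

theorem odd_crossCount_iff_oddCrossing (hD : D.WeaklySemisimple) (hij : i < j) (hkl : k < l)
    (hik : i < k) : Odd (D.crossCount i j k l) ↔ Sig.OddCrossing D.sig i j k l := by
  rcases le_or_gt j k with hjk | hkj
  · simp [D.crossCount_eq_zero_of_le hjk, Sig.OddCrossing, hjk.not_gt, (hkl.trans_le' hjk).not_gt]
  rcases lt_trichotomy j l with hjl | rfl | hlj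
  · simp [D.odd_crossCount_interleaved_iff hik hkj hjl, Sig.OddCrossing, hik, hkj, hjl, hjl.not_gt]
  · have heven := hD i j k j hij hkl (by simp [hik.ne]) (by simp [Adj])
    simp [Sig.OddCrossing, Nat.not_odd_iff_even.mpr heven]
  · simp [D.odd_crossCount_nested_iff hik hkl hlj, Sig.OddCrossing, hik, hkl, hlj, hlj.not_gt]

theorem odd_crossCount_iff (hD : D.WeaklySemisimple) (hij : i < j) (hkl : k < l)
    (hne : (i, j) ≠ (k, l)) : Odd (D.crossCount i j k l) ↔
      Sig.OddCrossing D.sig i j k l ∨ Sig.OddCrossing D.sig k l i j := by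
  rcases lt_trichotomy i k with hik | rfl | hki
  · simp [hD.odd_crossCount_iff_oddCrossing hij hkl hik, Sig.OddCrossing, hik.not_gt]
  · have heven := hD i j i l hij hkl hne (Or.inl rfl)
    simp [Sig.OddCrossing, Nat.not_odd_iff_even.mpr heven]
  · rw [D.crossCount_comm]
    simp [hD.odd_crossCount_iff_oddCrossing hkl hij hki, Sig.OddCrossing, hki.not_gt]

theorem ocr_eq (hD : D.WeaklySemisimple) : D.ocr = Sig.ocr D.sig := by
  let S : Set ((Fin n × Fin n) × (Fin n × Fin n)) :=
    {p | Sig.OddCrossing D.sig p.1.1 p.1.2 p.2.1 p.2.2}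
  have hS : S.ncard = Sig.ocr D.sig := by
    rw [Sig.ocr, ← Set.ncard_coe_finset, coe_filter_univ]
  have hordered : {p : (Fin n × Fin n) × (Fin n × Fin n) | p.1.1 < p.1.2 ∧ p.2.1 < p.2.2 ∧
      p.1 ≠ p.2 ∧ Odd (D.crossCount p.1.1 p.1.2 p.2.1 p.2.2)} = S ∪ Prod.swap ⁻¹' S := by
    ext ⟨⟨i, j⟩, ⟨k, l⟩⟩
    change (i < j ∧ k < l ∧ (i, j) ≠ (k, l) ∧ Odd (D.crossCount i j k l)) ↔
      Sig.OddCrossing D.sig i j k l ∨ Sig.OddCrossing D.sig k l i j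
    have hiff := hD.odd_crossCount_iff (i := i) (j := j) (k := k) (l := l)
    grind [Sig.OddCrossing]
  have hdisj : Disjoint S (Prod.swap ⁻¹' S) :=
    Set.disjoint_left.mpr fun p hp hp' => hp.left_lt.not_gt hp'.left_lt
  rw [ocr, hordered, Set.ncard_union_eq hdisj,
    ← Set.image_swap_eq_preimage_swap, Set.ncard_image_of_injective _ Prod.swap_injective, hS,
    ← two_mul, Nat.mul_div_cancel_left _ two_pos]

end XMonotoneDrawing.WeaklySemisimple

theorem semisimple_monotone_K4_ocr_le_one_and_E1_general (D : XMonotoneDrawing 4)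
    (hD : D.WeaklySemisimple) :
    D.ocr ≤ 1 ∧ D.ocr + Sig.Ek D.sig 1 = 3 := by
  rw [hD.ocr_eq]
  exact hD.admissible.ocr_add_Ek_one

/-- For every semisimple x-monotone drawing `D` of `K 4`: at most one
pair of edges crosses an odd number of times, and `ocr(D) + E₁(D) = 3`. -/
theorem semisimple_monotone_K4_ocr_le_one_and_E1 (D : XMonotoneDrawing 4)
    (hD : D.Semisimple) :
    D.ocr ≤ 1 ∧ D.ocr + Sig.Ek D.sig 1 = 3 :=
  semisimple_monotone_K4_ocr_le_one_and_E1_general D hD.weaklySemisimple
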